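/- arXiv:1110.6521 — 3 statements merged into one kernel-verified Lean document; each statement's English description precedes it below -/
import Mathlib

section
/- Let d ≥ 1 and let a : ℤ^d → ℂ be square-summable. Then Σ_{(l,s)∈ℤ^d×ℤ, l≠0} |b_u(l,s)|^{d+1} ≤ Σ_{r=0}^{d−1} T_{r,d}(u). -/
open scoped BigOperators
open Matrix

attribute [local instance] Classical.propDecidable

/-- The space-time Fourier coefficients of `|e^{itΔ}u|²`, where `a` are the Fourier
coefficients of `u`: `b_u(l,s) = Σ_{k : |k-l|²-|k|² = s} a_k conj(a_{k-l})`. -/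
noncomputable def bcoef {d : ℕ} (a : (Fin d → ℤ) → ℂ) (l : Fin d → ℤ) (s : ℤ) : ℂ :=
  ∑' k : Fin d → ℤ,
    if (k - l) ⬝ᵥ (k - l) - k ⬝ᵥ k = s then a k * (starRingEnd ℂ) (a (k - l)) else 0

/-- The lattice hyperplane `H_{(l,s)} = { j ∈ ℤ^d : 2 l·j = -s - |l|² }`. -/
def Hplane {d : ℕ} (l : Fin d → ℤ) (s : ℤ) : Set (Fin d → ℤ) :=
  {j | 2 * (l ⬝ᵥ j) = -s - l ⬝ᵥ l}

/-- The dimension of the affine variety spanned in `ℝ^d` by a set of lattice points: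
the dimension of the direction of their affine span. -/
noncomputable def spanDim {d : ℕ} (pts : Set (Fin d → ℤ)) : ℕ :=
  Module.finrank ℝ
    ((affineSpan ℝ ((fun (j : Fin d → ℤ) (i : Fin d) => (j i : ℝ)) '' pts)).direction)

/-- `T_{r,δ}(u) = Σ_{(l,s), l≠0} Σ_{(j₁,…,j_{δ+1}) ∈ H_{(l,s)}^{δ+1} ∩ 𝒱_r^δ}
Π_σ |a_{j_σ+l}| |a_{j_σ}|`. -/
noncomputable def Tsum (d δ r : ℕ) (a : (Fin d → ℤ) → ℂ) : ℝ :=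
  ∑' p : ((Fin d → ℤ) × ℤ) × (Fin (δ + 1) → (Fin d → ℤ)),
    if p.1.1 ≠ 0 ∧ (∀ σ, p.2 σ ∈ Hplane p.1.1 p.1.2) ∧ spanDim (Set.range p.2) = r
    then ∏ σ : Fin (δ + 1), ‖a (p.2 σ + p.1.1)‖ * ‖a (p.2 σ)‖ else 0

theorem aux_prod {X : Type*} (f : X → ℝ) (hf : ∀ x, 0 ≤ f x) (c : ℝ) (h : HasSum f c) (n : ℕ) :
    HasSum (fun y : Fin n → X => ∏ i, f (y i)) (c ^ n) := by
  induction n with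
  | zero =>
    simp
  | succ n ih =>
    have hs : Summable fun p : X × (Fin n → X) => f p.1 * ∏ i, f (p.2 i) :=
      Summable.mul_of_nonneg (f := f) (g := fun y : Fin n → X => ∏ i, f (y i))
        h.summable ih.summable hf (fun y => Finset.prod_nonneg fun i _ => hf _)
    have := h.mul ih hs
    rw [← (Fin.consEquiv (fun _ : Fin (n+1) => X)).hasSum_iff, pow_succ']
    have e : (fun y : Fin (n+1) → X => ∏ i, f (y i)) ∘ (Fin.consEquiv (fun _ : Fin (n+1) => X)) =
        fun p : X × (Fin n → X) => f p.1 * ∏ i, f (p.2 i) := by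
      funext p
      simp [Fin.consEquiv, Fin.prod_univ_succ]
    rw [e]
    exact this

/-- The removable-index condition. -/
def Econd {d : ℕ} (σ₀ : Fin (d + 1))
    (p : ((Fin d → ℤ) × ℤ) × (Fin (d + 1) → (Fin d → ℤ))) : Prop :=
  (∀ σ, p.2 σ ∈ Hplane p.1.1 p.1.2) ∧
    ∀ (w : Fin d → ℤ) (c : ℤ), (∀ σ, σ ≠ σ₀ → w ⬝ᵥ p.2 σ = c) → w ⬝ᵥ p.2 σ₀ = c

theorem exists_Econd {d : ℕ} (p : ((Fin d → ℤ) × ℤ) × (Fin (d + 1) → (Fin d → ℤ)))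
    (hl : p.1.1 ≠ 0) (hH : ∀ σ, p.2 σ ∈ Hplane p.1.1 p.1.2) : ∃ σ₀, Econd σ₀ p := by
  obtain ⟨⟨l, s⟩, j⟩ := p
  let M : Matrix (Fin (d+1)) (Fin (d+1)) ℤ := Matrix.of fun σ => Fin.cons 1 (j σ)
  have hdet : M.det = 0 := by
    rw [← Matrix.exists_mulVec_eq_zero_iff]
    refine ⟨Fin.cons (s + l ⬝ᵥ l) (2 • l), ?_, ?_⟩
    · intro h
      apply hl
      ext i
      have := congrFun h i.succ
      simpa using this
    · ext σ
      have := hH σ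
      simp only [Hplane, Set.mem_setOf_eq] at this
      simp only [M, Matrix.mulVec, Matrix.of_apply, dotProduct, Fin.sum_univ_succ, Fin.cons_zero,
        Fin.cons_succ, Pi.smul_apply, Pi.zero_apply] at this ⊢
      have e : ∑ i, j σ i * (2 • l i) = 2 * ∑ i, l i * j σ i := by
        rw [Finset.mul_sum]; exact Finset.sum_congr rfl fun i _ => by simp; ring
      rw [e, this]; ring
  obtain ⟨g, hg, hM⟩ := Matrix.exists_vecMul_eq_zero_iff.2 hdet
  obtain ⟨σ₀, h0⟩ := Function.ne_iff.1 hg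
  refine ⟨σ₀, hH, fun w c hw => ?_⟩
  have h1 : ∑ σ, g σ = 0 := by
    have := congrFun hM 0
    simpa [M, Matrix.vecMul, dotProduct] using this
  have h2 : ∀ i, ∑ σ, g σ * j σ i = 0 := fun i => by
    have := congrFun hM i.succ
    simpa [M, Matrix.vecMul, dotProduct] using this
  have h3 : ∑ σ, g σ * (w ⬝ᵥ j σ - c) = 0 := by
    simp only [mul_sub, Finset.sum_sub_distrib, ← Finset.sum_mul, h1, dotProduct, Finset.mul_sum]
    rw [Finset.sum_comm]
    simp only [mul_left_comm _ (w _), ← Finset.mul_sum, h2]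
    simp
  rw [Finset.sum_eq_single σ₀ (fun σ _ h => by rw [hw σ h]; ring) (by simp)] at h3
  have := (mul_eq_zero.1 h3).resolve_left h0
  simpa using (sub_eq_zero.1 this)

theorem Econd_inj {d : ℕ} (hd : 1 ≤ d) (σ₀ : Fin (d + 1))
    (p q : ((Fin d → ℤ) × ℤ) × (Fin (d + 1) → (Fin d → ℤ))) (hp : Econd σ₀ p) (hq : Econd σ₀ q)
    (h : Function.update p.2 σ₀ (p.2 σ₀ + p.1.1) = Function.update q.2 σ₀ (q.2 σ₀ + q.1.1)) :
    p = q := by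
  obtain ⟨⟨l, s⟩, j⟩ := p
  obtain ⟨⟨l', s'⟩, j'⟩ := q
  obtain ⟨hH, hE⟩ := hp
  obtain ⟨hH', hE'⟩ := hq
  simp only [Hplane, Set.mem_setOf_eq] at *
  have hne : ∀ σ, σ ≠ σ₀ → j σ = j' σ := fun σ hσ => by
    simpa [hσ] using congrFun h σ
  have h0 : j σ₀ + l = j' σ₀ + l' := by simpa using congrFun h σ₀
  have : Nontrivial (Fin (d+1)) := Fin.nontrivial_iff_two_le.2 (by omega)
  obtain ⟨τ, hτ⟩ := exists_ne σ₀
  have hw : ∀ σ, σ ≠ σ₀ → (l' - l) ⬝ᵥ j σ = (l' - l) ⬝ᵥ j τ := fun σ hσ => by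
    have a1 := hH σ
    have a2 := hH τ
    have a3 := hH' σ
    have a4 := hH' τ
    rw [← hne _ hσ] at a3
    rw [← hne _ hτ] at a4
    rw [sub_dotProduct, sub_dotProduct]; omega
  have e1 := hE (l' - l) _ hw
  have e2 := hE' (l' - l) _ (fun σ hσ => by rw [← hne σ hσ]; exact hw σ hσ)
  have hjl : j σ₀ - j' σ₀ = l' - l := by
    rw [sub_eq_sub_iff_add_eq_add, h0, add_comm]
  have e3 : (l' - l) ⬝ᵥ (l' - l) = 0 := by
    nth_rewrite 2 [← hjl]
    rw [dotProduct_sub, e1, e2, sub_self]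
  have e4 : l' = l := sub_eq_zero.1 (dotProduct_self_eq_zero.1 e3)
  subst e4
  have hj : j = j' := by
    ext1 σ
    by_cases hσ : σ = σ₀
    · subst hσ; exact add_right_cancel h0
    · exact hne σ hσ
  subst hj
  have := hH τ
  have := hH' τ
  have : s = s' := by omega
  subst this
  rfl

/-- The reflection `(l,s,j) ↦ (-l,-s,j+l)`. -/
def Psi {d : ℕ} (p : ((Fin d → ℤ) × ℤ) × (Fin (d + 1) → (Fin d → ℤ))) :
    ((Fin d → ℤ) × ℤ) × (Fin (d + 1) → (Fin d → ℤ)) :=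
  ((-p.1.1, -p.1.2), fun σ => p.2 σ + p.1.1)

theorem Psi_invol {d : ℕ} : Function.Involutive (Psi (d := d)) := by
  rintro ⟨⟨l, s⟩, j⟩
  simp [Psi]

theorem Psi_Econd {d : ℕ} (σ₀ : Fin (d + 1))
    (p : ((Fin d → ℤ) × ℤ) × (Fin (d + 1) → (Fin d → ℤ))) (hp : Econd σ₀ p) :
    Econd σ₀ (Psi p) := by
  obtain ⟨⟨l, s⟩, j⟩ := p
  obtain ⟨hH, hE⟩ := hp
  simp only [Hplane, Set.mem_setOf_eq, Psi, Econd] at *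
  refine ⟨fun σ => ?_, fun w c hw => ?_⟩
  · have := hH σ
    simp only [neg_dotProduct, dotProduct_neg, dotProduct_add]
    omega
  · have := hE w (c - w ⬝ᵥ l) (fun σ hσ => by have := hw σ hσ; rw [dotProduct_add] at this; omega)
    rw [dotProduct_add, this]; ring

/-- Majorant. -/
noncomputable def fA {d : ℕ} (a : (Fin d → ℤ) → ℂ) (σ₀ : Fin (d + 1))
    (p : ((Fin d → ℤ) × ℤ) × (Fin (d + 1) → (Fin d → ℤ))) : ℝ :=
  Set.indicator {p | Econd σ₀ p}
    (fun p => ∏ σ, ‖a (Function.update p.2 σ₀ (p.2 σ₀ + p.1.1) σ)‖ ^ 2) p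

theorem fA_nonneg {d : ℕ} (a : (Fin d → ℤ) → ℂ) (σ₀ : Fin (d + 1))
    (p : ((Fin d → ℤ) × ℤ) × (Fin (d + 1) → (Fin d → ℤ))) : 0 ≤ fA a σ₀ p :=
  Set.indicator_nonneg (fun _ _ => Finset.prod_nonneg fun _ _ => by positivity) _

theorem fA_summable {d : ℕ} (hd : 1 ≤ d) (a : (Fin d → ℤ) → ℂ)
    (ha : Summable fun k : Fin d → ℤ => ‖a k‖ ^ 2) (σ₀ : Fin (d + 1)) : Summable (fA a σ₀) := by
  have h := (aux_prod _ (fun x => by positivity) _ ha.hasSum (d+1)).summable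
  unfold fA
  rw [← summable_subtype_iff_indicator]
  exact h.comp_injective (i := fun p : {p | Econd σ₀ p} =>
    Function.update p.1.2 σ₀ (p.1.2 σ₀ + p.1.1.1))
    (fun p q hpq => Subtype.ext (Econd_inj hd σ₀ _ _ p.2 q.2 hpq))

/-- The full summand. -/
noncomputable def F0 {d : ℕ} (a : (Fin d → ℤ) → ℂ)
    (p : ((Fin d → ℤ) × ℤ) × (Fin (d + 1) → (Fin d → ℤ))) : ℝ :=
  if p.1.1 ≠ 0 ∧ (∀ σ, p.2 σ ∈ Hplane p.1.1 p.1.2)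
    then ∏ σ : Fin (d + 1), ‖a (p.2 σ + p.1.1)‖ * ‖a (p.2 σ)‖ else 0

theorem F0_nonneg {d : ℕ} (a : (Fin d → ℤ) → ℂ)
    (p : ((Fin d → ℤ) × ℤ) × (Fin (d + 1) → (Fin d → ℤ))) : 0 ≤ F0 a p := by
  unfold F0
  split_ifs
  · exact Finset.prod_nonneg fun _ _ => by positivity
  · exact le_rfl

theorem F0_le {d : ℕ} (a : (Fin d → ℤ) → ℂ)
    (p : ((Fin d → ℤ) × ℤ) × (Fin (d + 1) → (Fin d → ℤ))) :
    F0 a p ≤ ∑ σ₀, (fA a σ₀ p + fA a σ₀ (Psi p)) := by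
  have hnn : ∀ σ₀, 0 ≤ fA a σ₀ p + fA a σ₀ (Psi p) :=
    fun σ₀ => add_nonneg (fA_nonneg a σ₀ _) (fA_nonneg a σ₀ _)
  unfold F0
  split_ifs with h
  · obtain ⟨σ₀, hE⟩ := exists_Econd p h.1 h.2
    refine le_trans ?_ (Finset.single_le_sum (fun σ _ => hnn σ) (Finset.mem_univ σ₀))
    have hE' := Psi_Econd σ₀ p hE
    unfold fA
    rw [Set.indicator_of_mem (show p ∈ {p | Econd σ₀ p} from hE),
      Set.indicator_of_mem (show Psi p ∈ {p | Econd σ₀ p} from hE'),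
      Finset.prod_pow, Finset.prod_pow]
    have key : ∏ σ : Fin (d + 1), ‖a (p.2 σ + p.1.1)‖ * ‖a (p.2 σ)‖ =
        (∏ σ, ‖a (Function.update p.2 σ₀ (p.2 σ₀ + p.1.1) σ)‖) *
        ∏ σ, ‖a (Function.update (Psi p).2 σ₀ ((Psi p).2 σ₀ + (Psi p).1.1) σ)‖ := by
      rw [← Finset.prod_mul_distrib]
      refine Finset.prod_congr rfl fun σ _ => ?_
      by_cases hσ : σ = σ₀
      · subst hσ; simp [Psi]
      · simp [Psi, hσ, mul_comm]
    rw [key]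
    nlinarith [sq_nonneg ((∏ σ, ‖a (Function.update p.2 σ₀ (p.2 σ₀ + p.1.1) σ)‖) -
        ∏ σ, ‖a (Function.update (Psi p).2 σ₀ ((Psi p).2 σ₀ + (Psi p).1.1) σ)‖),
        sq_nonneg (∏ σ, ‖a (Function.update p.2 σ₀ (p.2 σ₀ + p.1.1) σ)‖),
        sq_nonneg (∏ σ, ‖a (Function.update (Psi p).2 σ₀ ((Psi p).2 σ₀ + (Psi p).1.1) σ)‖)]
  · exact Finset.sum_nonneg fun σ _ => hnn σ

theorem F0_summable {d : ℕ} (hd : 1 ≤ d) (a : (Fin d → ℤ) → ℂ)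
    (ha : Summable fun k : Fin d → ℤ => ‖a k‖ ^ 2) : Summable (F0 a) := by
  refine Summable.of_nonneg_of_le (F0_nonneg a) (F0_le a) ?_
  refine summable_sum fun σ₀ _ => ?_
  exact (fA_summable hd a ha σ₀).add ((fA_summable hd a ha σ₀).comp_injective Psi_invol.injective)

theorem spanDim_lt {d : ℕ} (l : Fin d → ℤ) (s : ℤ) (hl : l ≠ 0) (j : Fin (d + 1) → (Fin d → ℤ))
    (hH : ∀ σ, j σ ∈ Hplane l s) : spanDim (Set.range j) < d := by
  unfold spanDim
  let φ : (Fin d → ℝ) →ₗ[ℝ] ℝ := dotProductBilin ℝ ℝ (fun i => (l i : ℝ))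
  have hφ : ∀ v, φ v = (fun i => (l i : ℝ)) ⬝ᵥ v := fun v => rfl
  have hj : ∀ σ, 2 * φ (fun i => (j σ i : ℝ)) = -s - (l ⬝ᵥ l : ℤ) := fun σ => by
    have := hH σ
    simp only [Hplane, Set.mem_setOf_eq] at this
    rw [hφ]
    have h2 : (fun i => (l i : ℝ)) ⬝ᵥ (fun i => (j σ i : ℝ)) = ((l ⬝ᵥ j σ : ℤ) : ℝ) := by
      simp [dotProduct]
    rw [h2]
    exact_mod_cast this
  have hle : (affineSpan ℝ ((fun (j : Fin d → ℤ) (i : Fin d) => (j i : ℝ)) '' Set.range j)).direction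
      ≤ LinearMap.ker φ := by
    rw [direction_affineSpan, vectorSpan_def, Submodule.span_le]
    rintro v ⟨_, ⟨_, ⟨σ, rfl⟩, rfl⟩, _, ⟨_, ⟨τ, rfl⟩, rfl⟩, rfl⟩
    have h1 := hj σ
    have h2 := hj τ
    simp only [vsub_eq_sub, SetLike.mem_coe, LinearMap.mem_ker, map_sub]
    linarith
  refine lt_of_le_of_lt (Submodule.finrank_mono hle) ?_
  have hne : LinearMap.ker φ ≠ ⊤ := by
    intro h
    have : φ (fun i => (l i : ℝ)) = 0 := by
      rw [← LinearMap.mem_ker, h]; trivial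
    rw [hφ, dotProduct_self_eq_zero] at this
    apply hl
    ext i
    have := congrFun this i
    simpa using this
  have := Submodule.finrank_lt (lt_top_iff_ne_top.2 hne).ne
  simpa using this

theorem Tsum_eq {d : ℕ} (hd : 1 ≤ d) (a : (Fin d → ℤ) → ℂ)
    (ha : Summable fun k : Fin d → ℤ => ‖a k‖ ^ 2) :
    ∑ r ∈ Finset.range d, Tsum d d r a = ∑' p, F0 a p := by
  unfold Tsum
  rw [← Summable.tsum_finsetSum]
  · refine tsum_congr fun p => ?_
    unfold F0
    split_ifs with h
    · rw [Finset.sum_eq_single (spanDim (Set.range p.2))]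
      · rw [if_pos ⟨h.1, h.2, rfl⟩]
      · intro r _ hr
        rw [if_neg]
        rintro ⟨_, _, h3⟩
        exact hr h3.symm
      · intro hr
        exact absurd (Finset.mem_range.2 (spanDim_lt _ _ h.1 _ h.2)) hr
    · refine Finset.sum_eq_zero fun r _ => if_neg ?_
      rintro ⟨h1, h2, _⟩
      exact h ⟨h1, h2⟩
  · intro r _
    refine Summable.of_nonneg_of_le (fun p => ?_) (fun p => ?_) (F0_summable hd a ha)
    · split_ifs
      · exact Finset.prod_nonneg fun _ _ => by positivity
      · exact le_rfl
    · split_ifs with h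
      · rw [F0, if_pos ⟨h.1, h.2.1⟩]
      · exact F0_nonneg a p

/-- The fibre summand. -/
noncomputable def cterm {d : ℕ} (a : (Fin d → ℤ) → ℂ) (l : Fin d → ℤ) (s : ℤ)
    (j : Fin d → ℤ) : ℝ :=
  if j ∈ Hplane l s then ‖a (j + l)‖ * ‖a j‖ else 0

theorem cterm_nonneg {d : ℕ} (a : (Fin d → ℤ) → ℂ) (l : Fin d → ℤ) (s : ℤ)
    (j : Fin d → ℤ) : 0 ≤ cterm a l s j := by
  unfold cterm
  split_ifs
  · positivity
  · exact le_rfl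

theorem cterm_summable {d : ℕ} (a : (Fin d → ℤ) → ℂ)
    (ha : Summable fun k : Fin d → ℤ => ‖a k‖ ^ 2) (l : Fin d → ℤ) (s : ℤ) :
    Summable (cterm a l s) := by
  have h2 : Summable fun k : Fin d → ℤ => ‖a (k + l)‖ ^ 2 :=
    ha.comp_injective (add_left_injective l)
  refine Summable.of_nonneg_of_le (cterm_nonneg a l s) (fun j => ?_) (h2.add ha)
  unfold cterm
  split_ifs
  · nlinarith [sq_nonneg (‖a (j + l)‖ - ‖a j‖), sq_nonneg ‖a (j + l)‖, sq_nonneg ‖a j‖]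
  · positivity

theorem bcoef_le {d : ℕ} (a : (Fin d → ℤ) → ℂ)
    (ha : Summable fun k : Fin d → ℤ => ‖a k‖ ^ 2) (l : Fin d → ℤ) (s : ℤ) :
    ‖bcoef a l s‖ ≤ ∑' j, cterm a l s j := by
  unfold bcoef
  rw [← (Equiv.addRight l).tsum_eq]
  refine tsum_of_norm_bounded (cterm_summable a ha l s).hasSum fun j => ?_
  have hiff : ((j + l - l) ⬝ᵥ (j + l - l) - (j + l) ⬝ᵥ (j + l) = s) ↔ j ∈ Hplane l s := by
    simp only [Hplane, Set.mem_setOf_eq, add_sub_cancel_right, add_dotProduct, dotProduct_add,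
      dotProduct_comm j l]
    omega
  simp only [Equiv.coe_addRight, cterm, hiff]
  split_ifs
  · simp
  · simp

/-- `Σ_{(l,s), l≠0} |b_u(l,s)|^{d+1} ≤ Σ_{r=0}^{d-1} T_{r,d}(u)`. -/
theorem tsum_bcoef_pow_le_sum_Tsum (d : ℕ) (hd : 1 ≤ d) (a : (Fin d → ℤ) → ℂ)
    (ha : Summable fun k : Fin d → ℤ => ‖a k‖ ^ 2) :
    (Summable fun ls : (Fin d → ℤ) × ℤ =>
        if ls.1 ≠ 0 then ‖bcoef a ls.1 ls.2‖ ^ (d + 1) else 0) ∧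
      (∑' ls : (Fin d → ℤ) × ℤ,
          if ls.1 ≠ 0 then ‖bcoef a ls.1 ls.2‖ ^ (d + 1) else 0) ≤
        ∑ r ∈ Finset.range d, Tsum d d r a := by
  have hfib : ∀ ls : (Fin d → ℤ) × ℤ, HasSum (fun y => F0 a (ls, y))
      (if ls.1 ≠ 0 then (∑' j, cterm a ls.1 ls.2 j) ^ (d + 1) else 0) := by
    intro ls
    by_cases hl : ls.1 ≠ 0
    · rw [if_pos hl]
      convert aux_prod _ (cterm_nonneg a ls.1 ls.2) _ (cterm_summable a ha ls.1 ls.2).hasSum (d+1)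
        using 2 with y
      unfold F0 cterm
      by_cases h : ∀ σ, y σ ∈ Hplane ls.1 ls.2
      · rw [if_pos ⟨hl, h⟩]
        exact Finset.prod_congr rfl fun σ _ => (if_pos (h σ)).symm
      · rw [if_neg (fun h' => h h'.2)]
        push Not at h
        obtain ⟨σ, hσ⟩ := h
        exact (Finset.prod_eq_zero (Finset.mem_univ σ) (if_neg hσ)).symm
    · rw [if_neg hl]
      convert hasSum_zero using 2 with y
      exact if_neg (fun h => hl h.1)
  have hS := (F0_summable hd a ha).hasSum.prod_fiberwise hfib
  have hle : ∀ ls : (Fin d → ℤ) × ℤ,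
      (if ls.1 ≠ 0 then ‖bcoef a ls.1 ls.2‖ ^ (d + 1) else 0) ≤
      (if ls.1 ≠ 0 then (∑' j, cterm a ls.1 ls.2 j) ^ (d + 1) else 0) := by
    intro ls
    split_ifs
    · exact pow_le_pow_left₀ (norm_nonneg _) (bcoef_le a ha _ _) _
    · exact le_rfl
  have hsum := Summable.of_nonneg_of_le (fun ls => by split_ifs <;> positivity) hle hS.summable
  refine ⟨hsum, ?_⟩
  rw [Tsum_eq hd a ha, ← hS.tsum_eq]
  exact hsum.tsum_le_tsum hle hS.summable
end

section
/- Let d ≥ 1, let Λ ⊆ ℤ^d be a submodule of rank δ ≥ 1, and let a : ℤ^d → ℂ be square-summable with a_k = 0 for all k ∉ Λ and ‖u‖² = Σ_{k∈Λ} |a_k|². Then b_u(l,s) = 0 whenever l ∉ Λ, and Σ_{(l,s)∈ℤ^d×ℤ} |b_u(l,s)|^{δ+1} ≤ 2^δ · ‖u‖^{2(δ+1)}. -/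
open scoped BigOperators
open Matrix

open scoped ENNReal NNReal in
lemma aux_tsum_pow {X : Type*} (f : X → ℝ≥0∞) (n : ℕ) :
    (∑' x, f x) ^ n = ∑' k : Fin n → X, ∏ i, f (k i) := by
  induction n with
  | zero => simp
  | succ n ih =>
    rw [pow_succ', ih, ← (Fin.consEquiv (fun _ : Fin (n+1) => X)).tsum_eq, ENNReal.tsum_prod',
      ← ENNReal.tsum_mul_right]
    refine tsum_congr fun x => ?_
    rw [← ENNReal.tsum_mul_left]
    refine tsum_congr fun k => ?_
    simp [Fin.prod_univ_succ, Fin.consEquiv]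

open scoped ENNReal NNReal in
lemma aux_tsum_inj {α β : Type*} (f : α → β) (E : Set α) (hf : Set.InjOn f E) (g : β → ℝ≥0∞) :
    ∑' x, E.indicator (fun x => g (f x)) x ≤ ∑' y, g y := by
  rw [← tsum_subtype]
  exact ENNReal.tsum_comp_le_tsum_of_injective (f := fun x : E => f x)
    (fun x y h => Subtype.ext (hf x.2 y.2 h)) g

lemma aux_dep {d δ : ℕ} (Λ : Submodule ℤ (Fin d → ℤ)) (hrk : Module.finrank ℤ Λ = δ)
    (v : Fin δ → (Fin d → ℤ)) (hv : ∀ i, v i ∈ Λ) (l : Fin d → ℤ) (hl : l ∈ Λ) (hl0 : l ≠ 0)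
    (h : ∀ i, l ⬝ᵥ v i = 0) :
    ∃ j, ∀ w : Fin d → ℤ, (∀ i, i ≠ j → w ⬝ᵥ v i = 0) → w ⬝ᵥ v j = 0 := by
  have hdot : ∀ (w : Fin d → ℤ) (g : Fin δ → ℤ), w ⬝ᵥ (∑ i, g i • v i) = ∑ i, g i * (w ⬝ᵥ v i) := by
    intro w g
    rw [dotProduct_sum]
    refine Finset.sum_congr rfl fun i _ => ?_
    rw [dotProduct_smul, smul_eq_mul]
  by_cases hi : LinearIndependent ℤ v
  · exfalso
    let u : Fin (δ + 1) → Λ := Fin.cons ⟨l, hl⟩ (fun i => ⟨v i, hv i⟩)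
    have hu : LinearIndependent ℤ u := by
      rw [Fintype.linearIndependent_iff] at hi ⊢
      intro g hg
      have h1 : g 0 • l + ∑ i : Fin δ, g i.succ • v i = 0 := by
        have := congrArg (Subtype.val) hg
        simpa [Fin.sum_univ_succ, u] using this
      have h2 : g 0 = 0 := by
        have := congrArg (fun z => l ⬝ᵥ z) h1
        simp only [dotProduct_add, dotProduct_smul, hdot, h, mul_zero, Finset.sum_const_zero,
          add_zero, dotProduct_zero, smul_eq_mul] at this
        rcases mul_eq_zero.1 this with h3 | h3
        · exact h3
        · exact absurd (dotProduct_self_eq_zero.1 h3) hl0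
      rw [h2, zero_smul, zero_add] at h1
      intro i
      refine Fin.cases h2 (fun i => hi _ h1 i) i
    have := hu.fintype_card_le_finrank
    simp [hrk] at this
  · rw [Fintype.not_linearIndependent_iff] at hi
    obtain ⟨g, hg, j, hj⟩ := hi
    refine ⟨j, fun w hw => ?_⟩
    have h1 := hdot w g
    rw [hg, dotProduct_zero, Finset.sum_eq_single j (fun i _ hij => by rw [hw i hij, mul_zero])
      (by simp)] at h1
    exact (mul_eq_zero.1 h1.symm).resolve_left hj

/-- orthogonality of `l` to all differences, and dependence of the `j`-th difference. -/
def auxE {d δ : ℕ} (j : Fin δ) : Set ((Fin d → ℤ) × (Fin (δ + 1) → (Fin d → ℤ))) :=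
  {p | (∀ i, p.1 ⬝ᵥ (p.2 i - p.2 0) = 0) ∧
    ∀ w : Fin d → ℤ, (∀ i : Fin δ, i ≠ j → w ⬝ᵥ (p.2 i.succ - p.2 0) = 0) →
      w ⬝ᵥ (p.2 j.succ - p.2 0) = 0}

def auxPhi {d δ : ℕ} (j : Fin δ) (p : (Fin d → ℤ) × (Fin (δ + 1) → (Fin d → ℤ))) :
    Fin (δ + 1) → (Fin d → ℤ) := fun i => if i = j.succ then p.2 i - p.1 else p.2 i

def auxPsi {d δ : ℕ} (j : Fin δ) (p : (Fin d → ℤ) × (Fin (δ + 1) → (Fin d → ℤ))) :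
    Fin (δ + 1) → (Fin d → ℤ) := fun i => if i = j.succ then p.2 i else p.2 i - p.1

lemma auxPhi_inj {d δ : ℕ} (j : Fin δ) : Set.InjOn (auxPhi (d := d) j) (auxE j) := by
  rintro ⟨l, k⟩ ⟨h1, h2⟩ ⟨l', k'⟩ ⟨h1', h2'⟩ h
  simp only at h1 h2 h1' h2'
  have hne : ∀ i, i ≠ j.succ → k i = k' i := by
    intro i hi
    have := congrFun h i
    simpa [auxPhi, hi] using this
  have hj : k j.succ - l = k' j.succ - l' := by
    have := congrFun h j.succ
    simpa [auxPhi] using this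
  have h0 : k 0 = k' 0 := hne 0 (Fin.succ_ne_zero j).symm
  have e1 : (l - l') ⬝ᵥ (k j.succ - k 0) = 0 := by
    apply h2
    intro i hi
    rw [sub_dotProduct, h1, hne i.succ (by simpa using hi), h0, h1', sub_zero]
  have e2 : (l - l') ⬝ᵥ (k' j.succ - k' 0) = 0 := by
    apply h2'
    intro i hi
    rw [sub_dotProduct, h1', ← hne i.succ (by simpa using hi), ← h0, h1, sub_zero]
  have e3 : (l - l') ⬝ᵥ (l - l') = 0 := by
    have : l - l' = (k j.succ - k 0) - (k' j.succ - k' 0) := by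
      rw [← h0]
      have : k j.succ = k' j.succ - l' + l := by rw [← hj]; abel
      rw [this]; abel
    have e5 : (l - l') ⬝ᵥ ((k j.succ - k 0) - (k' j.succ - k' 0)) = 0 := by
      rw [dotProduct_sub, e1, e2, sub_zero]
    rwa [← this] at e5
  have e4 : l = l' := sub_eq_zero.1 (dotProduct_self_eq_zero.1 e3)
  subst e4
  refine Prod.ext rfl (funext fun i => ?_)
  by_cases hi : i = j.succ
  · subst hi; simpa using hj
  · exact hne i hi

lemma auxPsi_inj {d δ : ℕ} (j : Fin δ) : Set.InjOn (auxPsi (d := d) j) (auxE j) := by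
  let T : (Fin d → ℤ) × (Fin (δ + 1) → (Fin d → ℤ)) → (Fin d → ℤ) × (Fin (δ + 1) → (Fin d → ℤ)) :=
    fun p => (-p.1, fun i => p.2 i - p.1)
  have hT : ∀ p, auxPsi j p = auxPhi j (T p) := by
    intro p; funext i; simp [auxPsi, auxPhi, T]
  have hE : ∀ p ∈ auxE j, T p ∈ auxE j := by
    rintro p ⟨h1, h2⟩
    refine ⟨fun i => ?_, ?_⟩
    · have := h1 i
      simp only [T, sub_sub_sub_cancel_right, neg_dotProduct, this, neg_zero]
    · simpa [T] using h2
  have hi : Function.Injective T := by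
    rintro ⟨l, k⟩ ⟨l', k'⟩ h
    simp only [T, Prod.mk.injEq, neg_inj] at h
    obtain ⟨rfl, h⟩ := h
    refine Prod.ext rfl (funext fun i => ?_)
    simpa using congrFun h i
  intro p hp q hq h
  rw [hT, hT] at h
  exact hi (auxPhi_inj j (hE p hp) (hE q hq) h)

open scoped ENNReal NNReal in
lemma aux_class {d δ : ℕ} (A : (Fin d → ℤ) → ℝ≥0) (j : Fin δ) :
    ∑' p, (auxE j).indicator (fun p : (Fin d → ℤ) × (Fin (δ + 1) → (Fin d → ℤ)) =>
      ∏ i, ((A (p.2 i) : ℝ≥0∞) * A (p.2 i - p.1))) p ≤ (∑' k, (A k : ℝ≥0∞) ^ 2) ^ (δ + 1) := by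
  set N := (∑' k, (A k : ℝ≥0∞) ^ 2) ^ (δ + 1) with hN
  rw [aux_tsum_pow] at hN
  have h1 := aux_tsum_inj _ _ (auxPhi_inj (d := d) j) (fun m => ∏ i, (A (m i) : ℝ≥0∞) ^ 2)
  have h2 := aux_tsum_inj _ _ (auxPsi_inj (d := d) j) (fun m => ∏ i, (A (m i) : ℝ≥0∞) ^ 2)
  rw [← hN] at h1 h2
  have h3 := add_le_add h1 h2
  rw [← ENNReal.tsum_add, ← two_mul] at h3
  have h4 : 2 * ∑' p, (auxE j).indicator (fun p : (Fin d → ℤ) × (Fin (δ + 1) → (Fin d → ℤ)) =>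
      ∏ i, ((A (p.2 i) : ℝ≥0∞) * A (p.2 i - p.1))) p ≤ 2 * N := by
    refine le_trans ?_ h3
    rw [← ENNReal.tsum_mul_left]
    refine ENNReal.tsum_le_tsum fun p => ?_
    by_cases hp : p ∈ auxE j
    · simp only [Set.indicator_of_mem hp]
      have : ∏ i, (A (p.2 i) * A (p.2 i - p.1)) =
          (∏ i, A (auxPhi j p i)) * (∏ i, A (auxPsi j p i)) := by
        rw [← Finset.prod_mul_distrib]
        refine Finset.prod_congr rfl fun i _ => ?_
        by_cases hi : i = j.succ
        · simp [auxPhi, auxPsi, hi, mul_comm]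
        · simp [auxPhi, auxPsi, hi]
      rw [Finset.prod_pow, Finset.prod_pow]
      have h5 := two_mul_le_add_sq (∏ i, A (auxPhi j p i)) (∏ i, A (auxPsi j p i))
      rw [mul_assoc, ← this] at h5
      exact_mod_cast h5
    · simp [Set.indicator_of_notMem hp]
  exact (ENNReal.mul_le_mul_iff_right (by simp) (by simp)).1 h4

open scoped ENNReal NNReal in
lemma aux_main {d δ : ℕ} (Λ : Submodule ℤ (Fin d → ℤ)) (hrk : Module.finrank ℤ Λ = δ)
    (a : (Fin d → ℤ) → ℂ) (hsupp : ∀ k : Fin d → ℤ, k ∉ Λ → a k = 0) :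
    ∑' ls : (Fin d → ℤ) × ℤ, ‖bcoef a ls.1 ls.2‖ₑ ^ (δ + 1) ≤
      2 ^ δ * (∑' k, ‖a k‖ₑ ^ 2) ^ (δ + 1) := by
  classical
  let A : (Fin d → ℤ) → ℝ≥0 := fun k => ‖a k‖₊
  have hA : ∀ k, k ∉ Λ → A k = 0 := fun k hk => by simp [A, hsupp k hk]
  set N : ℝ≥0∞ := (∑' k, (A k : ℝ≥0∞) ^ 2) ^ (δ + 1) with hN
  let P : (Fin d → ℤ) → (Fin (δ + 1) → (Fin d → ℤ)) → ℝ≥0∞ :=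
    fun l k => ∏ i, ((A (k i) : ℝ≥0∞) * A (k i - l))
  let G : (Fin d → ℤ) → (Fin (δ + 1) → (Fin d → ℤ)) → ℝ≥0∞ :=
    fun l k => if ∀ i, l ⬝ᵥ (k i - k 0) = 0 then P l k else 0
  have step1 : ∀ l s, ‖bcoef a l s‖ₑ ^ (δ + 1) ≤ ∑' k : Fin (δ + 1) → (Fin d → ℤ),
      if s = (k 0 - l) ⬝ᵥ (k 0 - l) - k 0 ⬝ᵥ k 0 then G l k else 0 := by
    intro l s
    have : ‖bcoef a l s‖ₑ ≤ ∑' k : Fin d → ℤ,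
        if (k - l) ⬝ᵥ (k - l) - k ⬝ᵥ k = s then ((A k : ℝ≥0∞) * A (k - l)) else 0 := by
      refine (enorm_tsum_le_tsum_enorm).trans (ENNReal.tsum_le_tsum fun k => ?_)
      split_ifs
      · simp [A, enorm_mul, enorm_eq_nnnorm]
      · simp
    refine (pow_le_pow_left' this _).trans ?_
    rw [aux_tsum_pow]
    refine ENNReal.tsum_le_tsum fun k => ?_
    by_cases h : ∀ i, (k i - l) ⬝ᵥ (k i - l) - k i ⬝ᵥ k i = s
    · have h' : ∀ i, l ⬝ᵥ (k i - k 0) = 0 := by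
        intro i
        have e1 := h i
        have e2 := h 0
        simp only [sub_dotProduct, dotProduct_sub] at e1 e2 ⊢
        rw [dotProduct_comm (k i) l] at e1
        rw [dotProduct_comm (k 0) l] at e2
        linarith
      rw [if_pos (h 0).symm]
      simp only [G]
      rw [if_pos h']
      simp only [h, P, if_true, le_refl]
    · push Not at h
      obtain ⟨i, hi⟩ := h
      rw [Finset.prod_eq_zero (Finset.mem_univ i) (if_neg hi)]
      exact zero_le
  have step2 : ∑' ls : (Fin d → ℤ) × ℤ, ‖bcoef a ls.1 ls.2‖ₑ ^ (δ + 1) ≤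
      ∑' p : (Fin d → ℤ) × (Fin (δ + 1) → (Fin d → ℤ)), G p.1 p.2 := by
    rw [ENNReal.tsum_prod', ENNReal.tsum_prod']
    refine ENNReal.tsum_le_tsum fun l => ?_
    refine (ENNReal.tsum_le_tsum fun s => step1 l s).trans ?_
    rw [ENNReal.tsum_comm]
    refine ENNReal.tsum_le_tsum fun k => ?_
    rw [tsum_ite_eq]
  have step3 : ∀ p : (Fin d → ℤ) × (Fin (δ + 1) → (Fin d → ℤ)), G p.1 p.2 ≤
      (if p.1 = 0 then ∏ i, (A (p.2 i) : ℝ≥0∞) ^ 2 else 0) +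
      ∑ j : Fin δ, (auxE j).indicator (fun p => P p.1 p.2) p := by
    rintro ⟨l, k⟩
    by_cases hl : l = 0
    · subst hl
      simp [G, P, sq]
    by_cases h : ∀ i, l ⬝ᵥ (k i - k 0) = 0
    swap
    · simp only [G]; rw [if_neg h]; exact zero_le
    by_cases hP : P l k = 0
    · simp [G, hP]
    have hk : ∀ i, A (k i) ≠ 0 ∧ A (k i - l) ≠ 0 := by
      intro i
      have := Finset.prod_ne_zero_iff.1 hP i (Finset.mem_univ i)
      simpa using this
    have hk1 : ∀ i, k i ∈ Λ := fun i => by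
      by_contra hh; exact (hk i).1 (hA _ hh)
    have hk2 : l ∈ Λ := by
      have : k 0 - l ∈ Λ := by
        by_contra hh; exact (hk 0).2 (hA _ hh)
      have := Λ.sub_mem (hk1 0) this
      simpa using this
    obtain ⟨j, hj⟩ := aux_dep Λ hrk (fun i => k i.succ - k 0)
      (fun i => Λ.sub_mem (hk1 _) (hk1 _)) l hk2 hl (fun i => h _)
    have hm : (l, k) ∈ auxE j := ⟨h, hj⟩
    refine le_trans ?_ le_add_self
    refine le_trans ?_ (Finset.single_le_sum (f := fun j : Fin δ =>
      (auxE j).indicator (fun p => P p.1 p.2) (l, k)) (fun _ _ => zero_le) (Finset.mem_univ j))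
    simp only [Set.indicator_of_mem hm, G]
    rw [if_pos h]
  refine step2.trans ((ENNReal.tsum_le_tsum step3).trans ?_)
  rw [ENNReal.tsum_add, Summable.tsum_finsetSum (fun _ _ => ENNReal.summable)]
  have e0 : ∑' p : (Fin d → ℤ) × (Fin (δ + 1) → (Fin d → ℤ)),
      (if p.1 = 0 then ∏ i, (A (p.2 i) : ℝ≥0∞) ^ 2 else 0) = N := by
    rw [ENNReal.tsum_prod', ENNReal.tsum_comm, hN, aux_tsum_pow]
    refine tsum_congr fun k => ?_
    simp only
    rw [tsum_ite_eq]
  have e1 : ∑ j : Fin δ, ∑' p, (auxE j).indicator (fun p => P p.1 p.2) p ≤ ∑ _j : Fin δ, N :=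
    Finset.sum_le_sum fun j _ => aux_class A j
  rw [e0]
  refine (add_le_add le_rfl e1).trans ?_
  have e2 : ((δ : ℝ≥0∞) + 1) ≤ 2 ^ δ := by
    have : δ + 1 ≤ 2 ^ δ := Nat.lt_two_pow_self
    exact_mod_cast this
  have e3 : N + ∑ _j : Fin δ, N = ((δ : ℝ≥0∞) + 1) * N := by
    simp; ring
  rw [e3]
  exact mul_le_mul_left e2 N

/-- If `u` has Fourier support in a submodule `Λ ⊆ ℤ^d` of rank `δ ≥ 1`, then
`b_u(l,s) = 0` for `l ∉ Λ` and `Σ_{(l,s)} |b_u(l,s)|^{δ+1} ≤ 2^δ ‖u‖^{2(δ+1)}`. -/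
theorem tsum_bcoef_pow_le_of_support_submodule (d δ : ℕ) (hd : 1 ≤ d) (hδ : 1 ≤ δ)
    (Λ : Submodule ℤ (Fin d → ℤ)) (hrk : Module.finrank ℤ Λ = δ)
    (a : (Fin d → ℤ) → ℂ) (ha : Summable fun k : Fin d → ℤ => ‖a k‖ ^ 2)
    (hsupp : ∀ k : Fin d → ℤ, k ∉ Λ → a k = 0) :
    (∀ l : Fin d → ℤ, l ∉ Λ → ∀ s : ℤ, bcoef a l s = 0) ∧
      (Summable fun ls : (Fin d → ℤ) × ℤ => ‖bcoef a ls.1 ls.2‖ ^ (δ + 1)) ∧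
      (∑' ls : (Fin d → ℤ) × ℤ, ‖bcoef a ls.1 ls.2‖ ^ (δ + 1)) ≤
        2 ^ δ * (∑' k : Fin d → ℤ, ‖a k‖ ^ 2) ^ (δ + 1) := by
  constructor
  · intro l hl s
    have : ∀ k, a k * (starRingEnd ℂ) (a (k - l)) = 0 := by
      intro k
      by_cases hk : k ∈ Λ
      · have : k - l ∉ Λ := fun h => hl (by simpa using Λ.sub_mem hk h)
        simp [hsupp _ this]
      · simp [hsupp _ hk]
    simp [bcoef, this]
  have hC : 0 ≤ ∑' k : Fin d → ℤ, ‖a k‖ ^ 2 := tsum_nonneg fun _ => by positivity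
  have hm := aux_main Λ hrk a hsupp
  have hN : ∑' k, ‖a k‖ₑ ^ 2 = ENNReal.ofReal (∑' k : Fin d → ℤ, ‖a k‖ ^ 2) := by
    rw [ENNReal.ofReal_tsum_of_nonneg (fun _ => by positivity) ha]
    refine tsum_congr fun k => ?_
    rw [ENNReal.ofReal_pow (norm_nonneg _), ofReal_norm_eq_enorm]
  have key : ∀ F : Finset ((Fin d → ℤ) × ℤ), ∑ ls ∈ F, ‖bcoef a ls.1 ls.2‖ ^ (δ + 1) ≤
      2 ^ δ * (∑' k : Fin d → ℤ, ‖a k‖ ^ 2) ^ (δ + 1) := by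
    intro F
    have h1 := (ENNReal.sum_le_tsum F).trans hm
    rw [← ENNReal.ofReal_le_ofReal_iff (by positivity),
      ENNReal.ofReal_sum_of_nonneg (fun _ _ => by positivity),
      ENNReal.ofReal_mul (by positivity), ENNReal.ofReal_pow (by positivity),
      ENNReal.ofReal_pow hC, ← hN]
    simpa [ENNReal.ofReal_pow, ofReal_norm_eq_enorm] using h1
  exact ⟨summable_of_sum_le (fun _ => by positivity) key,
    Real.tsum_le_of_sum_le (fun _ => by positivity) key⟩
end

section
/- Let d ≥ 1 and let Λ ⊆ ℤ^d be a submodule of rank δ ≥ 1. Let (λ_n)_{n∈ℕ} be nonnegative reals with Σ_n λ_n < ∞, and for each n let a^n : ℤ^d → ℂ satisfy a^n_k = 0 for k ∉ Λ and Σ_{k∈ℤ^d} |a^n_k|² = 1 (i.e. the corresponding functions u_n ∈ L²(𝕋^d) have unit norm and Fourier support in Λ; for instance the eigenfunctions of a density matrix ρ ∈ ℒ₊¹(Λ)). Set b_ρ(l,s) := Σ_{n∈ℕ} λ_n · b_{u_n}(l,s) for (l,s) ∈ ℤ^d × ℤ. Then ( Σ_{(l,s)∈ℤ^d×ℤ}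 |b_ρ(l,s)|^{δ+1} )^{1/(δ+1)} ≤ 2^{δ/(δ+1)} · Σ_{n∈ℕ} λ_n. In particular there is a constant C_δ > 0, depending only on δ = rk Λ, such that ‖b_ρ‖_{ℓ^{δ+1}(ℤ^{d+1})} ≤ C_δ Σ_n λ_n. -/
open scoped BigOperators
open Matrix

lemma prod_tsum_aux {E : Type*} : ∀ (n : ℕ) (h : Fin n → E → ENNReal),
    (∏ i, ∑' k, h i k) = ∑' κ : Fin n → E, ∏ i, h i (κ i) := by
  intro n
  induction n with
  | zero => intro h; simp
  | succ n ih =>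
    intro h
    rw [Fin.prod_univ_succ, ih, ← (Fin.consEquiv (fun _ => E)).tsum_eq, ENNReal.tsum_prod']
    simp only [Fin.consEquiv, Equiv.coe_fn_mk, Fin.prod_univ_succ, Fin.cons_zero, Fin.cons_succ]
    simp only [ENNReal.tsum_mul_left, ENNReal.tsum_mul_right]

/-- the class -/
noncomputable def cls {d δ : ℕ} (l : Fin d → ℤ) (κ : Fin (δ+1) → Fin d → ℤ) : Finset (Fin δ) := by
  classical
  exact if l = 0 then Finset.univ else Finset.univ.filter fun i =>
    (fun a => ((κ i.succ a - κ 0 a : ℤ) : ℚ)) ∉ 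
      Submodule.span ℚ ((fun (j : Fin δ) (a : Fin d) => ((κ j.succ a - κ 0 a : ℤ) : ℚ)) '' {j | j < i})

noncomputable def phi {d δ : ℕ} (l : Fin d → ℤ) (κ : Fin (δ+1) → Fin d → ℤ) :
    Fin (δ+1) → Fin d → ℤ := by
  classical
  exact Fin.cons (κ 0) (fun j => if j ∈ cls l κ then κ j.succ else κ j.succ - l)

lemma cls_swap {d δ : ℕ} (l : Fin d → ℤ) (κ : Fin (δ+1) → Fin d → ℤ) :
    cls (-l) (fun i => κ i - l) = cls l κ := by
  by_cases hl : l = 0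
  · simp [cls, hl]
  · ext i
    simp only [cls, neg_eq_zero, hl, if_false, Finset.mem_filter, Pi.sub_apply,
      sub_sub_sub_cancel_right]

lemma mem_W {d δ : ℕ} (x : Fin δ → Fin d → ℚ) (S : Finset (Fin δ))
    (h : ∀ i, i ∉ S → x i ∈ Submodule.span ℚ (x '' {j | j < i})) (i : Fin δ) :
    x i ∈ Submodule.span ℚ (x '' S) := by
  induction i using WellFoundedLT.induction with
  | ind i ih =>
    by_cases hi : i ∈ S
    · exact Submodule.subset_span ⟨i, hi, rfl⟩
    · refine Submodule.span_le.2 ?_ (h i hi)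
      rintro _ ⟨j, hj, rfl⟩
      exact ih j hj

lemma orth_W {d : ℕ} {s : Set (Fin d → ℚ)} {w v : Fin d → ℚ} (h : ∀ x ∈ s, x ⬝ᵥ w = 0)
    (hv : v ∈ Submodule.span ℚ s) : v ⬝ᵥ w = 0 := by
  induction hv using Submodule.span_induction with
  | mem x hx => exact h x hx
  | zero => simp
  | add x y _ _ hx hy => simp [add_dotProduct, hx, hy]
  | smul a x _ hx => simp [smul_dotProduct, hx]

/-- the constraint set -/
def TT {d : ℕ} (δ : ℕ) (Λ : Submodule ℤ (Fin d → ℤ)) :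
    Set (((Fin d → ℤ) × ℤ) × (Fin (δ+1) → Fin d → ℤ)) :=
  {t | (∀ i, (t.2 i - t.1.1) ⬝ᵥ (t.2 i - t.1.1) - t.2 i ⬝ᵥ t.2 i = t.1.2) ∧ (∀ i, t.2 i ∈ Λ) ∧ t.1.1 ∈ Λ}

lemma orth_of_TT {d δ : ℕ} {Λ : Submodule ℤ (Fin d → ℤ)}
    {t : ((Fin d → ℤ) × ℤ) × (Fin (δ+1) → Fin d → ℤ)} (ht : t ∈ TT δ Λ) (i : Fin (δ+1)) :
    (fun a => ((t.2 i a - t.2 0 a : ℤ) : ℚ)) ⬝ᵥ (fun a => ((t.1.1 a : ℤ) : ℚ)) = 0 := by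
  have h1 := ht.1 i
  have h0 := ht.1 0
  have : (t.2 i - t.2 0) ⬝ᵥ t.1.1 = 0 := by
    simp only [sub_dotProduct, dotProduct_sub] at h1 h0 ⊢
    rw [dotProduct_comm t.1.1 (t.2 i)] at h1
    rw [dotProduct_comm t.1.1 (t.2 0)] at h0
    linarith
  have h2 : (((t.2 i - t.2 0) ⬝ᵥ t.1.1 : ℤ) : ℚ) = 0 := by rw [this]; simp
  simpa [dotProduct] using h2

lemma linInd_of_greedy {V : Type*} [AddCommGroup V] [Module ℚ V] : ∀ (n : ℕ) (x : Fin n → V),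
    (∀ i, x i ∉ Submodule.span ℚ (x '' {j | j < i})) → LinearIndependent ℚ x := by
  intro n
  induction n with
  | zero => intro x _; exact linearIndependent_empty_type
  | succ n ih =>
    intro x hx
    rw [linearIndependent_finSucc']
    refine ⟨ih _ ?_, ?_⟩
    · intro i hi
      apply hx i.castSucc
      refine Submodule.span_mono ?_ hi
      rintro _ ⟨j, hj, rfl⟩
      exact ⟨j.castSucc, by simpa using hj, rfl⟩
    · intro hi
      apply hx (Fin.last n)
      refine Submodule.span_mono ?_ hi
      rintro _ ⟨j, rfl⟩
      exact ⟨j.castSucc, by simp [Fin.castSucc_lt_last], rfl⟩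

lemma cls_ne_univ {d δ : ℕ} {Λ : Submodule ℤ (Fin d → ℤ)} (hrk : Module.finrank ℤ Λ = δ)
    {t : ((Fin d → ℤ) × ℤ) × (Fin (δ+1) → Fin d → ℤ)} (ht : t ∈ TT δ Λ) (hl : t.1.1 ≠ 0) :
    cls t.1.1 t.2 ≠ Finset.univ := by
  intro hS
  set x : Fin δ → Fin d → ℚ := fun j a => ((t.2 j.succ a - t.2 0 a : ℤ) : ℚ) with hx
  have hn : ∀ i, x i ∉ Submodule.span ℚ (x '' {j | j < i}) := by
    intro i
    have : i ∈ cls t.1.1 t.2 := by rw [hS]; simp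
    simpa [cls, hl, hx] using this
  have hli : LinearIndependent ℚ x := linInd_of_greedy δ x hn
  set w : Fin d → ℚ := fun a => ((t.1.1 a : ℤ) : ℚ) with hw
  have hw0 : w ≠ 0 := by
    intro h
    apply hl
    funext a
    have := congrFun h a
    simpa [hw] using this
  have hnw : w ∉ Submodule.span ℚ (Set.range x) := by
    intro h
    have := orth_W (w := w) (by rintro _ ⟨j, rfl⟩; exact orth_of_TT ht j.succ) h
    exact hw0 (dotProduct_self_eq_zero.1 this)
  have hli2 : LinearIndependent ℚ (Fin.cons w x : Fin (δ+1) → Fin d → ℚ) :=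
    linearIndependent_finCons.2 ⟨hli, hnw⟩
  have hli3 : LinearIndependent ℤ (Fin.cons w x : Fin (δ+1) → Fin d → ℚ) :=
    hli2.restrict_scalars (R := ℤ) (by intro a b h; simpa using h)
  let y : Fin (δ+1) → Λ := Fin.cons ⟨t.1.1, ht.2.2⟩ fun j => ⟨t.2 j.succ - t.2 0, Λ.sub_mem (ht.2.1 _) (ht.2.1 _)⟩
  let f : (Fin d → ℤ) →ₗ[ℤ] (Fin d → ℚ) := (Int.castAddHom ℚ).toIntLinearMap.compLeft (Fin d)
  have hy : (f ∘ₗ Λ.subtype) ∘ y = (Fin.cons w x : Fin (δ+1) → Fin d → ℚ) := by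
    funext i a
    refine Fin.cases ?_ (fun j => ?_) i <;> simp [y, f, hw, hx]
  have hli4 : LinearIndependent ℤ y := by
    apply LinearIndependent.of_comp (f ∘ₗ Λ.subtype)
    rw [hy]; exact hli3
  have := hli4.fintype_card_le_finrank
  simp [hrk] at this

lemma phi_inj {d δ : ℕ} {Λ : Submodule ℤ (Fin d → ℤ)} (hrk : Module.finrank ℤ Λ = δ) :
    Set.InjOn (fun t : ((Fin d → ℤ) × ℤ) × (Fin (δ+1) → Fin d → ℤ) =>
      (cls t.1.1 t.2, phi t.1.1 t.2)) (TT δ Λ) := by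
  intro t ht t' ht' h
  simp only [Prod.mk.injEq] at h
  obtain ⟨hS, hP⟩ := h
  have hP0 : t.2 0 = t'.2 0 := by simpa [phi] using congrFun hP 0
  have hPs : ∀ j : Fin δ, j ∈ cls t.1.1 t.2 → t.2 j.succ = t'.2 j.succ := by
    intro j hj
    have := congrFun hP j.succ
    simpa [phi, ← hS, hj] using this
  have hPn : ∀ j : Fin δ, j ∉ cls t.1.1 t.2 → t.2 j.succ - t.1.1 = t'.2 j.succ - t'.1.1 := by
    intro j hj
    have := congrFun hP j.succ
    simpa [phi, ← hS, hj] using this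
  have hll : t.1.1 = t'.1.1 := by
    by_cases hl : t.1.1 = 0
    · by_cases hl' : t'.1.1 = 0
      · rw [hl, hl']
      · exfalso
        apply cls_ne_univ hrk ht' hl'
        rw [← hS]; simp [cls, hl]
    by_cases hl' : t'.1.1 = 0
    · exfalso
      apply cls_ne_univ hrk ht hl
      rw [hS]; simp [cls, hl']
    obtain ⟨j, hj⟩ : ∃ j, j ∉ cls t.1.1 t.2 := by
      by_contra! hh
      exact cls_ne_univ hrk ht hl (Finset.eq_univ_iff_forall.2 hh)
    set x : Fin δ → Fin d → ℚ := fun j a => ((t.2 j.succ a - t.2 0 a : ℤ) : ℚ) with hx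
    set x' : Fin δ → Fin d → ℚ := fun j a => ((t'.2 j.succ a - t'.2 0 a : ℤ) : ℚ) with hx'
    have hxj := mem_W x (cls t.1.1 t.2) (by
      intro i hi
      simpa [cls, hl, hx] using hi) j
    have hxj' := mem_W x' (cls t'.1.1 t'.2) (by
      intro i hi
      simpa [cls, hl', hx'] using hi) j
    rw [← hS] at hxj'
    have him : x' '' (cls t.1.1 t.2) = x '' (cls t.1.1 t.2) := by
      apply Set.image_congr
      intro i hi
      funext a
      simp only [hx, hx', hPs i hi, hP0]
    rw [him] at hxj'
    have hd := Submodule.sub_mem _ hxj hxj'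
    set w : Fin d → ℚ := fun a => ((t.1.1 a : ℤ) : ℚ) with hw
    set w' : Fin d → ℚ := fun a => ((t'.1.1 a : ℤ) : ℚ) with hw'
    have e : x j - x' j = w - w' := by
      funext a
      have := congrFun (hPn j hj) a
      simp only [Pi.sub_apply] at this
      simp only [Pi.sub_apply, hx, hx', hw, hw', hP0]
      rw [← Int.cast_sub, ← Int.cast_sub]
      congr 1
      linarith
    rw [e] at hd
    have o1 := orth_W (w := w) (by rintro _ ⟨j, _, rfl⟩; exact orth_of_TT ht j.succ) hd
    rw [← him] at hd
    have o2 := orth_W (w := w') (by rintro _ ⟨j, _, rfl⟩; exact orth_of_TT ht' j.succ) hd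
    have o3 : (w - w') ⬝ᵥ (w - w') = 0 := by rw [dotProduct_sub, o1, o2, sub_zero]
    have o4 := sub_eq_zero.1 (dotProduct_self_eq_zero.1 o3)
    funext a
    have := congrFun o4 a
    simpa [hw, hw'] using this
  have hkk : t.2 = t'.2 := by
    funext i
    refine Fin.cases hP0 (fun j => ?_) i
    by_cases hj : j ∈ cls t.1.1 t.2
    · exact hPs j hj
    · have := hPn j hj
      rw [hll] at this
      exact sub_left_injective this
  have hss : t.1.2 = t'.1.2 := by rw [← ht.1 0, ← ht'.1 0, hll, hkk]
  exact Prod.ext (Prod.ext hll hss) hkk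

lemma TT_swap {d δ : ℕ} {Λ : Submodule ℤ (Fin d → ℤ)}
    {t : ((Fin d → ℤ) × ℤ) × (Fin (δ+1) → Fin d → ℤ)} (ht : t ∈ TT δ Λ) :
    ((-t.1.1, -t.1.2), fun i => t.2 i - t.1.1) ∈ TT δ Λ := by
  refine ⟨fun i => ?_, fun i => Λ.sub_mem (ht.2.1 i) ht.2.2, Λ.neg_mem ht.2.2⟩
  have := ht.1 i
  simp only [sub_neg_eq_add, sub_add_cancel]
  linarith

lemma phi_swap_inj {d δ : ℕ} {Λ : Submodule ℤ (Fin d → ℤ)} (hrk : Module.finrank ℤ Λ = δ) :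
    Set.InjOn (fun t : ((Fin d → ℤ) × ℤ) × (Fin (δ+1) → Fin d → ℤ) =>
      (cls (-t.1.1) (fun i => t.2 i - t.1.1), phi (-t.1.1) (fun i => t.2 i - t.1.1))) (TT δ Λ) := by
  intro t ht t' ht' h
  have := phi_inj hrk (TT_swap ht) (TT_swap ht') h
  simp only [Prod.mk.injEq, neg_inj] at this
  obtain ⟨⟨h1, h2⟩, h3⟩ := this
  refine Prod.ext (Prod.ext h1 h2) ?_
  funext i
  have := congrFun h3 i
  simp only [h1] at this
  exact sub_left_injective this

lemma two_mul_le_aux (x y : ENNReal) : 2 * (x * y) ≤ x ^ 2 + y ^ 2 := by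
  by_cases hx : x = ⊤
  · simp [hx]
  by_cases hy : y = ⊤
  · simp [hy]
  lift x to NNReal using hx
  lift y to NNReal using hy
  have := two_mul_le_add_sq x y
  rw [mul_assoc] at this
  exact_mod_cast this

lemma phi_prod {d δ : ℕ} (l : Fin d → ℤ) (κ : Fin (δ+1) → Fin d → ℤ)
    (g : Fin (δ+1) → (Fin d → ℤ) → ENNReal) :
    ∏ i, (g i (κ i) * g i (κ i - l)) =
     (∏ i, g i (phi l κ i)) * ∏ i, g i (phi (-l) (fun i => κ i - l) i) := by
  rw [← Finset.prod_mul_distrib]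
  refine Finset.prod_congr rfl fun i _ => ?_
  refine Fin.cases ?_ (fun j => ?_) i
  · simp [phi]
  · by_cases hj : j ∈ cls l κ
    · simp [phi, cls_swap, hj]
    · simp [phi, cls_swap, hj, mul_comm]

lemma sum_inj_le {d δ : ℕ} {T : Set (((Fin d → ℤ) × ℤ) × (Fin (δ+1) → Fin d → ℤ))}
    (C : ((Fin d → ℤ) × ℤ) × (Fin (δ+1) → Fin d → ℤ) → Finset (Fin δ))
    (P : ((Fin d → ℤ) × ℤ) × (Fin (δ+1) → Fin d → ℤ) → (Fin (δ+1) → Fin d → ℤ))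
    (h : Set.InjOn (fun t => (C t, P t)) T) (g : Fin (δ+1) → (Fin d → ℤ) → ENNReal)
    (hg : ∀ i, ∑' k, g i k ^ 2 = 1) :
    ∑' t : T, (∏ i, g i (P t i)) ^ 2 ≤ 2 ^ δ := by
  have h1 := ENNReal.tsum_comp_le_tsum_of_injective (f := fun t : T => (C t, P t)) h.injective
    (fun q => (∏ i, g i (q.2 i)) ^ 2)
  refine h1.trans ?_
  rw [ENNReal.tsum_prod']
  simp only [← Finset.prod_pow, ← prod_tsum_aux (δ+1) (fun i k => g i k ^ 2), hg]
  simp [tsum_fintype]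

lemma multilinear_bound {d δ : ℕ} {Λ : Submodule ℤ (Fin d → ℤ)} (hrk : Module.finrank ℤ Λ = δ)
    (g : Fin (δ+1) → (Fin d → ℤ) → ENNReal) (hg : ∀ i, ∑' k, g i k ^ 2 = 1)
    (hs : ∀ i k, k ∉ Λ → g i k = 0) :
    ∑' ls : (Fin d → ℤ) × ℤ, ∏ i, ∑' k : Fin d → ℤ,
      (if (k - ls.1) ⬝ᵥ (k - ls.1) - k ⬝ᵥ k = ls.2 then g i k * g i (k - ls.1) else 0) ≤ 2 ^ δ := by
  simp only [prod_tsum_aux]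
  rw [← ENNReal.tsum_prod]
  set F : ((Fin d → ℤ) × ℤ) × (Fin (δ+1) → Fin d → ℤ) → ENNReal := fun t =>
    ∏ i, (if (t.2 i - t.1.1) ⬝ᵥ (t.2 i - t.1.1) - t.2 i ⬝ᵥ t.2 i = t.1.2 then
      g i (t.2 i) * g i (t.2 i - t.1.1) else 0) with hF
  change ∑' t, F t ≤ _
  have hsup : Function.support F ⊆ TT δ Λ := by
    intro t ht
    have hne : ∀ i, _ := fun i => Finset.prod_ne_zero_iff.1 (Function.mem_support.1 ht) i (Finset.mem_univ i)
    simp only [ne_eq, ite_eq_right_iff, not_forall, mul_eq_zero, not_or] at hne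
    have hk : ∀ i, t.2 i ∈ Λ := fun i => by
      by_contra h
      exact (hne i).2.1 (hs i _ h)
    have hk0 : t.2 0 - t.1.1 ∈ Λ := by
      by_contra h
      exact (hne 0).2.2 (hs 0 _ h)
    refine ⟨fun i => (hne i).1, hk, ?_⟩
    simpa using Λ.sub_mem (hk 0) hk0
  rw [← tsum_subtype_eq_of_support_subset hsup]
  have key : 2 * ∑' t : TT δ Λ, F t ≤ 2 * 2 ^ δ := by
    rw [← ENNReal.tsum_mul_left]
    calc ∑' t : TT δ Λ, 2 * F t ≤ ∑' t : TT δ Λ, ((∏ i, g i (phi t.1.1.1 t.1.2 i)) ^ 2 +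
          (∏ i, g i (phi (-t.1.1.1) (fun i => t.1.2 i - t.1.1.1) i)) ^ 2) := by
          refine ENNReal.tsum_le_tsum fun t => ?_
          refine le_trans ?_ (two_mul_le_aux _ _)
          rw [← phi_prod]
          gcongr
          simp only [hF]
          refine Finset.prod_le_prod' fun i _ => ?_
          split_ifs <;> simp
      _ ≤ 2 ^ δ + 2 ^ δ := by
          rw [ENNReal.tsum_add]
          exact add_le_add (sum_inj_le _ (fun t => phi t.1.1 t.2) (phi_inj hrk) g hg)
            (sum_inj_le _ (fun t => phi (-t.1.1) (fun i => t.2 i - t.1.1)) (phi_swap_inj hrk) g hg)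
      _ = 2 * 2 ^ δ := (two_mul _).symm
  exact (ENNReal.mul_le_mul_iff_right (by simp) (by simp)).1 key


/-- Theorem 3 (density-matrix version): if `ρ = Σ λ_n u_n ⊗ u_n*` with the `u_n` of unit
norm and Fourier support in a rank-`δ` submodule `Λ ⊆ ℤ^d`, then
`‖b_ρ‖_{ℓ^{δ+1}(ℤ^{d+1})} ≤ 2^{δ/(δ+1)} Σ_n λ_n`. -/
theorem lp_norm_bcoef_density_matrix_le (d δ : ℕ) (hd : 1 ≤ d) (hδ : 1 ≤ δ)
    (Λ : Submodule ℤ (Fin d → ℤ)) (hrk : Module.finrank ℤ Λ = δ)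
    (lam : ℕ → ℝ) (hlam : ∀ n, 0 ≤ lam n) (hlamsum : Summable lam)
    (a : ℕ → (Fin d → ℤ) → ℂ)
    (hsupp : ∀ n, ∀ k : Fin d → ℤ, k ∉ Λ → a n k = 0)
    (hsq : ∀ n, Summable fun k : Fin d → ℤ => ‖a n k‖ ^ 2)
    (hnorm : ∀ n, (∑' k : Fin d → ℤ, ‖a n k‖ ^ 2) = 1)
    (brho : (Fin d → ℤ) → ℤ → ℂ)
    (hbrho : ∀ (l : Fin d → ℤ) (s : ℤ),
      brho l s = ∑' n : ℕ, (lam n : ℂ) * bcoef (a n) l s) :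
    (Summable fun ls : (Fin d → ℤ) × ℤ => ‖brho ls.1 ls.2‖ ^ (δ + 1)) ∧
      (∑' ls : (Fin d → ℤ) × ℤ, ‖brho ls.1 ls.2‖ ^ (δ + 1)) ^ ((1 : ℝ) / (δ + 1)) ≤
        2 ^ ((δ : ℝ) / (δ + 1)) * ∑' n : ℕ, lam n := by
  set p := δ + 1 with hp
  set g : ℕ → (Fin d → ℤ) → ENNReal := fun n k => ‖a n k‖ₑ with hg
  have hg1 : ∀ n, ∑' k, g n k ^ 2 = 1 := by
    intro n
    have h1 := ENNReal.ofReal_tsum_of_nonneg (fun k => by positivity) (hsq n)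
    rw [hnorm n, ENNReal.ofReal_one] at h1
    rw [h1]
    refine tsum_congr fun k => ?_
    rw [ENNReal.ofReal_pow (norm_nonneg _), ofReal_norm]
  have hgs : ∀ n k, k ∉ Λ → g n k = 0 := by
    intro n k hk
    simp [hg, hsupp n k hk]
  set f : ℕ → (Fin d → ℤ) × ℤ → ENNReal := fun n ls => ∑' k : Fin d → ℤ,
      (if (k - ls.1) ⬝ᵥ (k - ls.1) - k ⬝ᵥ k = ls.2 then g n k * g n (k - ls.1) else 0) with hf
  set L : ENNReal := ∑' n, ENNReal.ofReal (lam n) with hL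
  have hLr : L = ENNReal.ofReal (∑' n, lam n) := (ENNReal.ofReal_tsum_of_nonneg hlam hlamsum).symm
  have hb : ∀ n ls, ‖bcoef (a n) ls.1 ls.2‖ₑ ≤ f n ls := by
    intro n ls
    refine enorm_tsum_le_tsum_enorm.trans (ENNReal.tsum_le_tsum fun k => ?_)
    split_ifs
    · rw [enorm_mul, RCLike.enorm_conj]
    · simp
  have hbr : ∀ ls : (Fin d → ℤ) × ℤ, ‖brho ls.1 ls.2‖ₑ ≤ ∑' n, ENNReal.ofReal (lam n) * f n ls := by
    intro ls
    rw [hbrho]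
    refine enorm_tsum_le_tsum_enorm.trans (ENNReal.tsum_le_tsum fun n => ?_)
    rw [enorm_mul]
    refine mul_le_mul' (le_of_eq ?_) (hb n ls)
    rw [← ofReal_norm, Complex.norm_real, Real.norm_of_nonneg (hlam n)]
  have main : ∑' ls : (Fin d → ℤ) × ℤ, ‖brho ls.1 ls.2‖ₑ ^ p ≤ 2 ^ δ * L ^ p := by
    calc ∑' ls : (Fin d → ℤ) × ℤ, ‖brho ls.1 ls.2‖ₑ ^ p
        ≤ ∑' ls : (Fin d → ℤ) × ℤ, ∏ _i : Fin p, ∑' n, ENNReal.ofReal (lam n) * f n ls := by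
          refine ENNReal.tsum_le_tsum fun ls => ?_
          rw [Finset.prod_const, Finset.card_univ, Fintype.card_fin]
          exact pow_le_pow_left' (hbr ls) p
      _ = ∑' ν : Fin p → ℕ, (∏ i, ENNReal.ofReal (lam (ν i))) * ∑' ls, ∏ i, f (ν i) ls := by
          simp only [prod_tsum_aux]
          rw [ENNReal.tsum_comm]
          simp only [Finset.prod_mul_distrib, ENNReal.tsum_mul_left]
      _ ≤ ∑' ν : Fin p → ℕ, (∏ i, ENNReal.ofReal (lam (ν i))) * 2 ^ δ := by
          refine ENNReal.tsum_le_tsum fun ν => mul_le_mul_right ?_ _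
          exact multilinear_bound hrk (fun i => g (ν i)) (fun i => hg1 _) (fun i => hgs _)
      _ = 2 ^ δ * L ^ p := by
          rw [ENNReal.tsum_mul_right, ← prod_tsum_aux p (fun _ n => ENNReal.ofReal (lam n)),
            Finset.prod_const, Finset.card_univ, Fintype.card_fin, mul_comm]
  have hLn : 0 ≤ ∑' n, lam n := tsum_nonneg hlam
  have hrhs : (2 : ENNReal) ^ δ * L ^ p = ENNReal.ofReal (2 ^ δ * (∑' n, lam n) ^ p) := by
    rw [hLr, ENNReal.ofReal_mul (by positivity), ENNReal.ofReal_pow (by positivity),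
      ENNReal.ofReal_pow hLn, ENNReal.ofReal_ofNat]
  rw [hrhs] at main
  have hnt : ∑' ls : (Fin d → ℤ) × ℤ, ‖brho ls.1 ls.2‖ₑ ^ p ≠ ⊤ :=
    ne_top_of_le_ne_top ENNReal.ofReal_ne_top main
  have hsum : Summable fun ls : (Fin d → ℤ) × ℤ => ‖brho ls.1 ls.2‖ ^ p := by
    simpa using ENNReal.summable_toReal hnt
  refine ⟨hsum, ?_⟩
  have hle : ∑' ls : (Fin d → ℤ) × ℤ, ‖brho ls.1 ls.2‖ ^ p ≤ 2 ^ δ * (∑' n, lam n) ^ p := by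
    rw [← ENNReal.ofReal_le_ofReal_iff (by positivity),
      ENNReal.ofReal_tsum_of_nonneg (fun _ => by positivity) hsum]
    refine le_trans (le_of_eq (tsum_congr fun ls => ?_)) main
    rw [ENNReal.ofReal_pow (norm_nonneg _), ofReal_norm]
  have hp0 : (0 : ℝ) < (δ : ℝ) + 1 := by positivity
  calc _ ≤ (2 ^ δ * (∑' n, lam n) ^ p) ^ ((1 : ℝ) / (δ + 1)) :=
        Real.rpow_le_rpow (tsum_nonneg fun _ => by positivity) hle (by positivity)
    _ = _ := by
        rw [Real.mul_rpow (by positivity) (by positivity), ← Real.rpow_natCast, ← Real.rpow_natCast,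
          ← Real.rpow_mul (by norm_num), ← Real.rpow_mul hLn]
        congr 1
        · congr 1
          field_simp
        · rw [hp]
          push_cast
          rw [mul_one_div_cancel hp0.ne', Real.rpow_one]
end
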